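/- Let P ⊆ ℝ³ be a 3-dimensional reflexive polytope with respect to ℤ³. Then the lattice points of ℤ³ lying on the boundary of P generate the full lattice ℤ³, i.e., Λ_2 = ℤ³. -/

import Mathlib

/-!
A vertex `η` of the dual polytope that is a lattice point cuts out a facet of `P` on the hyperplane
`⟨x, η⟩ = -1`, and the vertices of this facet span the whole space. Among the bases consisting of
lattice points of the facet choose one whose determinant has the least absolute value. Replacing a
basis vector by a lattice point of the simplex that the basis spans would make the determinant
smaller, so that simplex is empty.

In dimension at most `3` the vertices of an empty simplex on `⟨x, η⟩ = -1` generate the lattice.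
Subtracting integer multiples of the vertices, move a lattice point to one with coordinates in
`[0, 1)`. The sum of the coordinates is minus the pairing with `η`, hence `0`, `1` or `2`. The value
`1` would give a lattice point of the simplex other than a vertex, and so would the value `2`, after
the central symmetry of the parallelepiped. So the coordinates vanish.
-/

/-- The standard pairing `⟨x, y⟩ = ∑ i, x i * y i` on `ℝ^n`. -/
def dotProd {n : ℕ} (x y : Fin n → ℝ) : ℝ := ∑ i, x i * y i

/-- A point of `ℝ^n` is a lattice point if all its coordinates are integers. -/
def IsLatticePt {n : ℕ} (x : Fin n → ℝ) : Prop := ∀ i, ∃ m : ℤ, x i = (m : ℝ)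

/-- A lattice polytope is the convex hull of finitely many lattice points. -/
def IsLatticePolytope {n : ℕ} (P : Set (Fin n → ℝ)) : Prop :=
  ∃ V : Set (Fin n → ℝ), V.Finite ∧ (∀ x ∈ V, IsLatticePt x) ∧ P = convexHull ℝ V

/-- The dual polytope `P* = {y : ⟨x, y⟩ ≥ -1 for all x ∈ P}`. -/
def dualPolytope {n : ℕ} (P : Set (Fin n → ℝ)) : Set (Fin n → ℝ) :=
  {y | ∀ x ∈ P, -1 ≤ dotProd x y}

/-- A reflexive polytope: a lattice polytope containing `0` in its interior
(hence full-dimensional) whose dual is again a lattice polytope. -/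
def IsReflexive {n : ℕ} (P : Set (Fin n → ℝ)) : Prop :=
  IsLatticePolytope P ∧ (0 : Fin n → ℝ) ∈ interior P ∧ IsLatticePolytope (dualPolytope P)

/-- A face of a polytope (an exposed face). -/
def IsFaceOf {n : ℕ} (P F : Set (Fin n → ℝ)) : Prop := IsExposed ℝ P F

/-- A facet: a nonempty face of dimension `n - 1`. -/
def IsFacetOf {n : ℕ} (P F : Set (Fin n → ℝ)) : Prop :=
  IsFaceOf P F ∧ F.Nonempty ∧ Module.finrank ℝ ↥(vectorSpan ℝ F) = n - 1

/-- `Λ_k` : the subgroup of `ℝ^n` generated by all lattice points lying in faces of `P`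
of dimension at most `k` (the `k`-skeleton).  It is a subgroup of the lattice `ℤ^n`. -/
def skeletonLattice {n : ℕ} (P : Set (Fin n → ℝ)) (k : ℕ) : AddSubgroup (Fin n → ℝ) :=
  AddSubgroup.closure
    {x | IsLatticePt x ∧
      ∃ F : Set (Fin n → ℝ), IsFaceOf P F ∧ Module.finrank ℝ ↥(vectorSpan ℝ F) ≤ k ∧ x ∈ F}

/-- The lattice `ℤ^n`, as the subgroup of `ℝ^n` generated by (= consisting of) all
lattice points. -/
def latticeSubgroup (n : ℕ) : AddSubgroup (Fin n → ℝ) :=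
  AddSubgroup.closure {x | IsLatticePt x}

/-- `x` is a (Demazure) root of `P` with facet `F` and inner normal `η`:
`x` is a lattice point in the relative interior of the facet `F`, and `η` is the
lattice point with `⟨η, v⟩ = -1` for all `v ∈ F`. -/
def IsRoot {n : ℕ} (P : Set (Fin n → ℝ)) (x : Fin n → ℝ) (F : Set (Fin n → ℝ))
    (η : Fin n → ℝ) : Prop :=
  IsLatticePt x ∧ IsFacetOf P F ∧ x ∈ intrinsicInterior ℝ F ∧
    IsLatticePt η ∧ ∀ v ∈ F, dotProd η v = -1

open Filter Module Set Topology

section Pairing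

variable {n : ℕ} {P : Set (Fin n → ℝ)} {η : Fin n → ℝ}

theorem dotProd_eq_dotProduct (x y : Fin n → ℝ) : dotProd x y = x ⬝ᵥ y := rfl

theorem isLinearMap_dotProd_left (η : Fin n → ℝ) : IsLinearMap ℝ fun x ↦ dotProd x η :=
  ⟨fun x y ↦ add_dotProduct x y η, fun c x ↦ smul_dotProduct c x η⟩

theorem sum_repr_eq_neg_dotProd {ι : Type*} [Fintype ι] (b : Basis ι ℝ (Fin n → ℝ))
    (hb : ∀ i, dotProd (b i) η = -1) (x : Fin n → ℝ) : ∑ i, b.repr x i = -dotProd x η := by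
  conv_rhs => rw [← b.sum_repr x]
  simp only [dotProd_eq_dotProduct] at hb ⊢
  simp [sum_dotProduct, hb, -Basis.sum_repr]

theorem zero_mem_dualPolytope (P : Set (Fin n → ℝ)) : 0 ∈ dualPolytope P := fun x _ ↦ by
  simp [dotProd]

theorem dualPolytope_convexHull (V : Set (Fin n → ℝ)) :
    dualPolytope (convexHull ℝ V) = dualPolytope V :=
  Subset.antisymm (fun _ hy v hv ↦ hy v (subset_convexHull ℝ V hv)) fun y hy _ hx ↦
    convexHull_min hy (convex_halfSpace_ge (isLinearMap_dotProd_left y) (-1)) hx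

/-- The face of `P` where the inequality `-1 ≤ ⟨x, η⟩` is tight, for `η` in the dual polytope. When
`η` is a vertex of the dual of a polytope `P`, this is the facet of `P` with inner normal `η`. -/
def dualFace (P : Set (Fin n → ℝ)) (η : Fin n → ℝ) : Set (Fin n → ℝ) :=
  {x ∈ P | dotProd x η = -1}

theorem convex_dualFace (hP : Convex ℝ P) (η : Fin n → ℝ) : Convex ℝ (dualFace P η) :=
  hP.inter (convex_hyperplane (isLinearMap_dotProd_left η) (-1))

theorem dualFace_subset_frontier (hη : η ∈ dualPolytope P) : dualFace P η ⊆ frontier P := by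
  rintro x ⟨hxP, hxη⟩
  refine ⟨subset_closure hxP, fun hint ↦ ?_⟩
  -- Scaling `x` by any factor above `1` leaves `P`.
  have htendsto : Tendsto (fun t : ℝ ↦ t • x) (𝓝[>] 1) (𝓝 x) := by
    have : Continuous fun t : ℝ ↦ t • x := by fun_prop
    simpa using (this.tendsto 1).mono_left nhdsWithin_le_nhds
  obtain ⟨t, htP, ht : 1 < t⟩ :=
    ((htendsto.eventually (mem_interior_iff_mem_nhds.mp hint)).and self_mem_nhdsWithin).exists
  have : -1 ≤ t * -1 := by simpa [(isLinearMap_dotProd_left η).map_smul, hxη] using hη _ htP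
  linarith

end Pairing

section ExtremePoints

theorem eq_zero_of_mem_extremePoints_of_forall_tight {E ι : Type*} [AddCommGroup E] [Module ℝ E]
    [Finite ι] {f : ι → Dual ℝ E} {c : ι → ℝ} {y u : E}
    (hy : y ∈ extremePoints ℝ {z | ∀ i, c i ≤ f i z}) (hu : ∀ i, f i y = c i → f i u = 0) :
    u = 0 := by
  -- Small multiples of `u` use up no slack and do not affect the tight inequalities.
  have hpos : ∀ᶠ ε in 𝓝 (0 : ℝ), ∀ i, c i ≤ f i (y + ε • u) := by
    refine eventually_all.mpr fun i ↦ ?_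
    rcases (hy.1 i).eq_or_lt with htight | hslack
    · simp [hu i htight.symm, htight]
    · have hcont : Continuous fun ε : ℝ ↦ f i (y + ε • u) := by
        simp only [map_add, map_smul]
        fun_prop
      exact hcont.continuousAt.eventually_const_le (by simpa using hslack)
  have hneg : ∀ᶠ ε in 𝓝 (0 : ℝ), ∀ i, c i ≤ f i (y + (-ε) • u) :=
    (continuous_neg.tendsto' 0 0 neg_zero).eventually hpos
  obtain ⟨ε, ⟨hεpos, hεneg⟩, hε : ε ≠ 0⟩ :=
    (((hpos.and hneg).filter_mono nhdsWithin_le_nhds).and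
      (self_mem_nhdsWithin (s := {0}ᶜ))).exists
  have hmid : y ∈ openSegment ℝ (y + ε • u) (y + (-ε) • u) :=
    ⟨1 / 2, 1 / 2, by norm_num, by norm_num, by norm_num, by module⟩
  simpa [hε] using hy.2 hεpos hεneg hmid

theorem span_dualFace_eq_top {n : ℕ} {V : Set (Fin n → ℝ)} (hV : V.Finite) {η : Fin n → ℝ}
    (hη : η ∈ extremePoints ℝ (dualPolytope V)) : Submodule.span ℝ (dualFace V η) = ⊤ := by
  have := hV.to_subtype
  by_contra hne
  obtain ⟨f, hf, hle⟩ := Submodule.exists_le_ker_of_lt_top _ (lt_top_iff_ne_top.mpr hne)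
  obtain ⟨u, rfl⟩ := (dotProductEquiv ℝ (Fin n)).surjective f
  have hdual : dualPolytope V = {z | ∀ v : V, -1 ≤ dotProductEquiv ℝ (Fin n) v z} := by
    ext z
    simp [dualPolytope, dotProd_eq_dotProduct]
  rw [hdual] at hη
  refine hf ((LinearEquiv.map_eq_zero_iff _).mpr
    (eq_zero_of_mem_extremePoints_of_forall_tight hη fun v hv ↦ ?_))
  have : u ⬝ᵥ (v : Fin n → ℝ) = 0 := hle (Submodule.subset_span ⟨v.2, hv⟩)
  rwa [dotProduct_comm] at this

end ExtremePoints

section Lattice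

variable {n : ℕ} {P : Set (Fin n → ℝ)} {x y η : Fin n → ℝ}

theorem mem_latticeSubgroup : x ∈ latticeSubgroup n ↔ IsLatticePt x := by
  have hrange : {x : Fin n → ℝ | IsLatticePt x} =
      ((Int.castAddHom ℝ).compLeft (Fin n)).range := by
    ext x
    simp only [IsLatticePt, mem_ofPred_eq, Classical.skolem, SetLike.mem_coe,
      AddMonoidHom.mem_range, funext_iff, eq_comm (a := x _)]
    rfl
  rw [latticeSubgroup, hrange, AddSubgroup.closure_eq, ← SetLike.mem_coe, ← hrange, mem_ofPred_eq]

theorem IsLatticePt.exists_dotProd_eq_intCast (hx : IsLatticePt x) (hy : IsLatticePt y) :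
    ∃ m : ℤ, dotProd x y = m := by
  choose a ha using hx
  choose b hb using hy
  exact ⟨∑ i, a i * b i, by simp [dotProd, ha, hb]⟩

theorem exists_det_eq_intCast {v : Fin n → Fin n → ℝ} (hv : ∀ i, IsLatticePt (v i)) :
    ∃ m : ℤ, (Pi.basisFun ℝ (Fin n)).det v = m := by
  choose A hA using hv
  have hmap : v = (Matrix.of A).map (Int.cast : ℤ → ℝ) := by
    ext i j
    simp [hA]
  exact ⟨(Matrix.of A).det, by rw [Pi.basisFun_det_apply, hmap, Int.cast_det]; rfl⟩

theorem IsLatticePolytope.convex (hP : IsLatticePolytope P) : Convex ℝ P := by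
  obtain ⟨V, -, -, rfl⟩ := hP
  exact convex_convexHull ℝ V

theorem IsLatticePolytope.exists_mem_extremePoints (hP : IsLatticePolytope P)
    (hne : P.Nonempty) : ∃ x ∈ extremePoints ℝ P, IsLatticePt x := by
  obtain ⟨V, hfin, hV, rfl⟩ := hP
  obtain ⟨x, hx⟩ := (hfin.isCompact_convexHull ℝ).extremePoints_nonempty hne
  exact ⟨x, hx, hV x (extremePoints_convexHull_subset hx)⟩

theorem IsLatticePolytope.span_isLatticePt_dualFace_eq_top (hP : IsLatticePolytope P)
    (hη : η ∈ extremePoints ℝ (dualPolytope P)) :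
    Submodule.span ℝ {x ∈ dualFace P η | IsLatticePt x} = ⊤ := by
  obtain ⟨V, hfin, hV, rfl⟩ := hP
  rw [dualPolytope_convexHull] at hη
  refine top_unique (span_dualFace_eq_top hfin hη ▸ Submodule.span_mono fun x hx ↦ ?_)
  exact ⟨⟨subset_convexHull ℝ V hx.1, hx.2⟩, hV x hx.1⟩

end Lattice

section Basis

variable {𝕜 ι E : Type*} [Field 𝕜] [AddCommGroup E] [Module 𝕜 E] {x : E}

theorem exists_basis_forall_mem {s : Set E} (b₀ : Basis ι 𝕜 E) (hs : Submodule.span 𝕜 s = ⊤) :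
    ∃ b : Basis ι 𝕜 E, ∀ i, b i ∈ s := by
  let b := Basis.ofSpan hs.ge
  refine ⟨b.reindex (b.indexEquiv b₀), fun i ↦ Basis.ofSpan_subset hs.ge ?_⟩
  rw [b.reindex_apply]
  exact mem_range_self _

theorem exists_basis_eq_update [Fintype ι] [DecidableEq ι] (b : Basis ι 𝕜 E) {k : ι}
    (hk : b.repr x k ≠ 0) :
    ∃ b' : Basis ι 𝕜 E, ⇑b' = Function.update b k x ∧ b.det b' = b.repr x k := by
  have hdet : b.det (Function.update b k x) = b.repr x k := by
    rw [b.det_apply, b.toMatrix_update, b.toMatrix_self, ← Matrix.cramer_apply, Matrix.cramer_one,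
      Module.End.one_apply]
  obtain ⟨hli, hspan⟩ := b.is_basis_iff_det.mpr (hdet ▸ hk.isUnit)
  exact ⟨Basis.mk hli hspan.ge, Basis.coe_mk hli hspan.ge, by rwa [Basis.coe_mk]⟩

variable [LinearOrder 𝕜] [IsStrictOrderedRing 𝕜]

theorem convexHull_range_basis [Fintype ι] (b : Basis ι 𝕜 E) :
    convexHull 𝕜 (range b) = b.equivFun ⁻¹' stdSimplex 𝕜 ι := by
  classical
  refine Subset.antisymm (convexHull_min ?_ ?_) fun x hx ↦ ?_
  · rintro _ ⟨i, rfl⟩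
    simpa [Finsupp.single_eq_pi_single] using single_mem_stdSimplex 𝕜 i
  · exact (convex_stdSimplex 𝕜 ι).linear_preimage b.equivFun.toLinearMap
  · rw [← b.sum_equivFun x]
    exact (convex_convexHull 𝕜 _).sum_mem (fun i _ ↦ hx.1 i) hx.2
      fun i _ ↦ subset_convexHull 𝕜 _ (mem_range_self i)

theorem eq_single_of_mem_stdSimplex [Fintype ι] [DecidableEq ι] {w : ι → 𝕜}
    (hw : w ∈ stdSimplex 𝕜 ι) {k : ι} (hk : 1 ≤ w k) : w = Pi.single k 1 := by
  ext i
  rcases eq_or_ne i k with rfl | hik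
  · rw [Pi.single_eq_same]
    exact (mem_Icc_of_mem_stdSimplex hw i).2.antisymm hk
  · rw [Pi.single_eq_of_ne hik]
    refine (hw.1 i).antisymm' (not_lt.mp fun hi ↦ hk.not_gt ?_)
    calc w k < ∑ j, w j := Finset.single_lt_sum hik (Finset.mem_univ k) (Finset.mem_univ i) hi
          fun j _ _ ↦ hw.1 j
      _ = 1 := hw.2

theorem eq_of_mem_convexHull_range_basis [Finite ι] {b : Basis ι 𝕜 E}
    (hx : x ∈ convexHull 𝕜 (range b)) {k : ι} (hk : 1 ≤ b.repr x k) : x = b k := by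
  classical
  cases nonempty_fintype ι
  apply b.equivFun.injective
  rw [eq_single_of_mem_stdSimplex ((convexHull_range_basis b).subset hx) hk, b.equivFun_apply,
    b.repr_self, Finsupp.single_eq_pi_single]

end Basis

section EmptySimplex

variable {n : ℕ} {x η : Fin n → ℝ}

theorem exists_basis_forall_abs_det_le {s : Set (Fin n → ℝ)} (hs : ∀ x ∈ s, IsLatticePt x)
    (hspan : Submodule.span ℝ s = ⊤) :
    ∃ b : Basis (Fin n) ℝ (Fin n → ℝ), (∀ i, b i ∈ s) ∧
      ∀ b' : Basis (Fin n) ℝ (Fin n → ℝ), (∀ i, b' i ∈ s) →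
        |(Pi.basisFun ℝ (Fin n)).det b| ≤ |(Pi.basisFun ℝ (Fin n)).det b'| := by
  let bases : Set (Basis (Fin n) ℝ (Fin n → ℝ)) := {b | ∀ i, b i ∈ s}
  let absDet (b : Basis (Fin n) ℝ (Fin n → ℝ)) : ℝ := |(Pi.basisFun ℝ (Fin n)).det b|
  have hcast : ∀ b ∈ bases, (⌊absDet b⌋₊ : ℝ) = absDet b := fun b hb ↦ by
    obtain ⟨m, hm⟩ := exists_det_eq_intCast fun i ↦ hs _ (hb i)
    simp only [absDet, hm, ← Int.cast_abs, Int.abs_eq_natAbs, Int.cast_natCast, Nat.floor_natCast]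
  obtain ⟨b, hb, hmin⟩ := exists_minimalFor_of_wellFoundedLT (· ∈ bases) (⌊absDet ·⌋₊)
    (exists_basis_forall_mem (Pi.basisFun ℝ (Fin n)) hspan)
  refine ⟨b, hb, fun b' hb' ↦ ?_⟩
  change absDet b ≤ absDet b'
  rw [← hcast b hb, ← hcast b' hb']
  exact_mod_cast le_of_not_gt fun hlt ↦ hlt.not_ge (hmin hb' hlt.le)

/-- A lattice simplex, given by its vertices, is *empty* if it contains no lattice points other than
its vertices. The vertices being lattice points is part of the notion. -/
def IsEmptySimplex {ι : Type*} (v : ι → Fin n → ℝ) : Prop :=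
  {x ∈ convexHull ℝ (range v) | IsLatticePt x} = range v

theorem exists_basis_isEmptySimplex {K : Set (Fin n → ℝ)} (hK : Convex ℝ K)
    (hspan : Submodule.span ℝ {x ∈ K | IsLatticePt x} = ⊤) :
    ∃ b : Basis (Fin n) ℝ (Fin n → ℝ), (∀ i, b i ∈ K) ∧ IsEmptySimplex b := by
  obtain ⟨b, hb, hmin⟩ := exists_basis_forall_abs_det_le (fun _ hx ↦ hx.2) hspan
  refine ⟨b, fun i ↦ (hb i).1, Subset.antisymm ?_ ?_⟩
  · rintro x ⟨hx, hxl⟩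
    have hsum : ∑ i, b.repr x i = 1 := ((convexHull_range_basis b).subset hx).2
    obtain ⟨k, -, hk⟩ : ∃ k ∈ Finset.univ, 0 < b.repr x k :=
      Finset.exists_lt_of_sum_lt (by simp only [hsum, Finset.sum_const_zero, zero_lt_one])
    obtain ⟨b', hb', hdet⟩ := exists_basis_eq_update b hk.ne'
    have hb'K : ∀ i, b' i ∈ {x ∈ K | IsLatticePt x} := fun i ↦ by
      rw [hb']
      rcases eq_or_ne i k with rfl | hik
      · have hbK : range b ⊆ K := range_subset_iff.mpr fun j ↦ (hb j).1
        simpa using ⟨convexHull_min hbK hK hx, hxl⟩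
      · simpa [hik] using hb i
    have hle := hmin b' hb'K
    rw [← (Pi.basisFun ℝ (Fin n)).det_mul_det b b', hdet, abs_mul, abs_of_pos hk] at hle
    have hpos := abs_pos.mpr ((Pi.basisFun ℝ (Fin n)).isUnit_det b).ne_zero
    exact ⟨k, (eq_of_mem_convexHull_range_basis hx ((le_mul_iff_one_le_right hpos).mp hle)).symm⟩
  · rintro _ ⟨i, rfl⟩
    exact ⟨subset_convexHull ℝ _ (mem_range_self i), (hb i).2⟩

namespace IsEmptySimplex

theorem isLatticePt {ι : Type*} {v : ι → Fin n → ℝ} (hv : IsEmptySimplex v) (i : ι) :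
    IsLatticePt (v i) :=
  (hv.symm.subset (mem_range_self i)).2

variable {b : Basis (Fin n) ℝ (Fin n → ℝ)}

theorem sum_repr_ne_one (hb : IsEmptySimplex b) (hx : IsLatticePt x)
    (hxb : x ∈ ZSpan.fundamentalDomain b) : ∑ i, b.repr x i ≠ 1 := fun hsum ↦ by
  have hhull : x ∈ convexHull ℝ (range b) :=
    (convexHull_range_basis b).superset ⟨fun i ↦ (hxb i).1, hsum⟩
  obtain ⟨i, rfl⟩ := hb.subset ⟨hhull, hx⟩
  simpa using (hxb i).2

theorem sum_repr_ne_sub_one [Nontrivial (Fin n)] (hb : IsEmptySimplex b) (hx : IsLatticePt x)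
    (hxb : x ∈ ZSpan.fundamentalDomain b) : ∑ i, b.repr x i ≠ n - 1 := fun hsum ↦ by
  have hrepr (i : Fin n) : b.repr (∑ j, b j - x) i = 1 - b.repr x i := by
    simp [Finsupp.single_apply]
  have hreflsum : ∑ i, b.repr (∑ j, b j - x) i = 1 := by
    simp only [hrepr, Finset.sum_sub_distrib, hsum]
    simp
  have hrefl : IsLatticePt (∑ j, b j - x) := mem_latticeSubgroup.mp
    (sub_mem (sum_mem fun j _ ↦ mem_latticeSubgroup.mpr (hb.isLatticePt j))
      (mem_latticeSubgroup.mpr hx))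
  have hpos (i : Fin n) : 0 < b.repr (∑ j, b j - x) i := by
    rw [hrepr]
    exact sub_pos.mpr (hxb i).2
  refine hb.sum_repr_ne_one hrefl (fun i ↦ ⟨(hpos i).le, ?_⟩) hreflsum
  obtain ⟨j, hj⟩ := exists_ne i
  calc b.repr (∑ j, b j - x) i < ∑ k, b.repr (∑ j, b j - x) k :=
        Finset.single_lt_sum hj (Finset.mem_univ i) (Finset.mem_univ j) (hpos j)
          fun k _ _ ↦ (hpos k).le
    _ = 1 := hreflsum

theorem eq_zero_of_mem_fundamentalDomain (hn : n ≤ 3) (hb : IsEmptySimplex b) (hη : IsLatticePt η)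
    (hbη : ∀ i, dotProd (b i) η = -1) (hx : IsLatticePt x)
    (hxb : x ∈ ZSpan.fundamentalDomain b) : x = 0 := by
  have hnonneg (i : Fin n) : 0 ≤ b.repr x i := (hxb i).1
  by_contra hne
  obtain ⟨k, hk⟩ : ∃ k, b.repr x k ≠ 0 := by
    contrapose! hne
    exact b.ext_elem (by simpa using hne)
  obtain ⟨m, hm⟩ : ∃ m : ℤ, ∑ i, b.repr x i = m := by
    obtain ⟨m, hm⟩ := hx.exists_dotProd_eq_intCast hη
    exact ⟨-m, by rw [sum_repr_eq_neg_dotProd b hbη, hm, Int.cast_neg]⟩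
  have hm_pos : 0 < m := by
    have := Finset.sum_pos' (fun i _ ↦ hnonneg i) ⟨k, Finset.mem_univ k, (hnonneg k).lt_of_ne' hk⟩
    exact_mod_cast hm ▸ this
  have hm_lt : m < n := by
    have : ∑ i, b.repr x i < ∑ _i : Fin n, 1 :=
      Finset.sum_lt_sum_of_nonempty ⟨k, Finset.mem_univ k⟩ fun i _ ↦ (hxb i).2
    rw [hm, Finset.sum_const, Finset.card_univ, Fintype.card_fin, nsmul_one] at this
    exact_mod_cast this
  obtain rfl | ⟨rfl, rfl⟩ : m = 1 ∨ n = 3 ∧ m = 2 := by omega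
  · exact hb.sum_repr_ne_one hx hxb (by simpa using hm)
  · exact hb.sum_repr_ne_sub_one hx hxb (by rw [hm]; norm_num)

theorem closure_range_eq_latticeSubgroup (hn : n ≤ 3) (hb : IsEmptySimplex b) (hη : IsLatticePt η)
    (hbη : ∀ i, dotProd (b i) η = -1) :
    AddSubgroup.closure (range b) = latticeSubgroup n := by
  have hle : AddSubgroup.closure (range b) ≤ latticeSubgroup n :=
    AddSubgroup.closure_mono (range_subset_iff.mpr hb.isLatticePt)
  refine hle.antisymm fun x hx ↦ ?_
  have hfloor : (ZSpan.floor b x : Fin n → ℝ) ∈ AddSubgroup.closure (range b) := by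
    rw [← Submodule.span_int_eq_addSubgroupClosure]
    exact (ZSpan.floor b x).2
  have hfract : ZSpan.fract b x = 0 :=
    hb.eq_zero_of_mem_fundamentalDomain hn hη hbη
      (mem_latticeSubgroup.mp (sub_mem hx (hle hfloor))) (ZSpan.fract_mem_fundamentalDomain b x)
  rwa [sub_eq_zero.mp hfract]

end IsEmptySimplex

end EmptySimplex

section Generation

variable {n : ℕ} {P : Set (Fin n → ℝ)} {η : Fin n → ℝ}

theorem closure_dualFace_eq_latticeSubgroup (hn : n ≤ 3) (hP : IsLatticePolytope P)
    (hη : η ∈ extremePoints ℝ (dualPolytope P)) (hηl : IsLatticePt η) :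
    AddSubgroup.closure {x | IsLatticePt x ∧ x ∈ dualFace P η} = latticeSubgroup n := by
  obtain ⟨b, hbP, hb⟩ := exists_basis_isEmptySimplex (convex_dualFace hP.convex η)
    (hP.span_isLatticePt_dualFace_eq_top hη)
  refine le_antisymm (AddSubgroup.closure_mono fun x hx ↦ hx.1) ?_
  rw [← hb.closure_range_eq_latticeSubgroup hn hηl fun i ↦ (hbP i).2]
  exact AddSubgroup.closure_mono (range_subset_iff.mpr fun i ↦ ⟨hb.isLatticePt i, hbP i⟩)

/-- A lattice point `η` that is a vertex of the dual polytope is the inner normal of a facet of `P`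
at lattice distance one from the origin. -/
theorem reflexive_threefold_boundary_generates_general (hn : n ≤ 3) (hP : IsLatticePolytope P)
    (hη : η ∈ extremePoints ℝ (dualPolytope P)) (hηl : IsLatticePt η) :
    AddSubgroup.closure {x : Fin n → ℝ | IsLatticePt x ∧ x ∈ frontier P} = latticeSubgroup n := by
  refine le_antisymm (AddSubgroup.closure_mono fun x hx ↦ hx.1) ?_
  rw [← closure_dualFace_eq_latticeSubgroup hn hP hη hηl]
  exact AddSubgroup.closure_mono fun x hx ↦ ⟨hx.1, dualFace_subset_frontier hη.1 hx.2⟩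

end Generation

/-- For a `3`-dimensional reflexive polytope `P ⊆ ℝ³`, the lattice points on the boundary
of `P` generate the full lattice `ℤ³`: `Λ₂ = ℤ³`. -/
theorem reflexive_threefold_boundary_generates (P : Set (Fin 3 → ℝ))
    (hP : IsReflexive P) :
    AddSubgroup.closure {x : Fin 3 → ℝ | IsLatticePt x ∧ x ∈ frontier P} =
      latticeSubgroup 3 := by
  obtain ⟨η, hη, hηl⟩ := hP.2.2.exists_mem_extremePoints ⟨0, zero_mem_dualPolytope P⟩
  exact reflexive_threefold_boundary_generates_general le_rfl hP.1 hη hηl
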